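/- For integers a_0, …, a_15, if e_0 + e_4 ≢ e_2 + e_6 (mod 2) and e_1 + e_5 ≢ e_3 + e_7 (mod 2), then Re(α_1) ≡ (−1)^{b_2} + 2(b_0 b_2 + b_1 b_3 + c_0 c_2 + c_1 c_3) (mod 8) and Im(α_1) ≡ (−1)^{b_1} + 2(b_0 b_2 + b_1 b_3 + c_0 c_2 + c_1 c_3) (mod 8). -/

import Mathlib

open Complex Finset

noncomputable def zeta16 : ℂ := Complex.exp (2 * Real.pi * Complex.I / 16)

noncomputable def fpoly (a : Fin 16 → ℤ) (x : ℂ) : ℂ := ∑ k : Fin 16, (a k : ℂ) * x ^ (k : ℕ)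

noncomputable def Nprod (a : Fin 16 → ℤ) (d : ℕ) : ℂ :=
  ∏ l ∈ Finset.filter (fun l => Nat.gcd l 16 = d) (Finset.range 16), fpoly a (zeta16 ^ l)

def circMatrix (a : Fin 16 → ℤ) : Matrix (Fin 16) (Fin 16) ℤ := fun i j => a (i - j)

def S16 : Set ℤ := { n | ∃ a : Fin 16 → ℤ, n = (circMatrix a).det }

def bcoef (a : Fin 16 → ℤ) (k : Fin 16) : ℤ := (a k + a (k + 8)) + (a (k + 4) + a (k + 12))
def ccoef (a : Fin 16 → ℤ) (k : Fin 16) : ℤ := (a k + a (k + 8)) - (a (k + 4) + a (k + 12))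
def ecoef (a : Fin 16 → ℤ) (k : Fin 16) : ℤ := a k - a (k + 8)

/-! Over `ℤ[i]` write `f(ζ) = g₀ + g₁ζ + g₂ζ² + g₃ζ³` with `g_k = e_k + i e_{k+4}`. The four factors
of `α₁` are the values of this cubic at `ζ, iζ, -ζ, -iζ`, so `α₁ = A² + i A'²`, where
`A = g₀² + i g₂² - 2i g₁g₃` comes from `f(ζ)f(-ζ) = A + Bζ²` and `A'` is the same expression for the
coefficients `(i g₃, g₀, g₁, g₂)` of `ζ f(ζ)`. The hypotheses say that the prime `1 + i` divides
exactly one of `g₀, g₂` and exactly one of `g₁, g₃`. Since `(1 + i)² = 2i`, the square of a Gaussian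
integer prime to `1 + i` is `1 + 2t` with `2 ∣ t(t + 1)`, and this gives `A² ≡ ±1 + 4 g₁g₃` and
`A'² ≡ ±1 + 4 g₀g₂` modulo `8`, with signs given by the parities of `b₂` and `b₁`. Finally
`4 i x ≡ 4 x` modulo `8` when `1 + i` divides `x`, so `g₀g₂ + g₁g₃` enters the real and the
imaginary part alike. -/

local notation "ι" => (Zsqrtd.sqrtd : GaussianInt)

lemma dvd_mul_of_not_dvd_iff_dvd {R : Type*} [CommMonoid R] {p x y : R} (h : ¬(p ∣ x ↔ p ∣ y)) :
    p ∣ x * y := by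
  by_cases hx : p ∣ x
  · exact hx.mul_right y
  · exact Dvd.dvd.mul_left (by tauto) x

lemma re_im_modEq_of_dvd_sub {d : ℤ} {x : ℤ√d} {n u v : ℤ}
    (h : (n : ℤ√d) ∣ x - (u + (Zsqrtd.sqrtd : ℤ√d) * v)) :
    x.re ≡ u [ZMOD n] ∧ x.im ≡ v [ZMOD n] := by
  obtain ⟨hre, him⟩ := (Zsqrtd.intCast_dvd n _).mp h
  exact ⟨(Int.modEq_iff_dvd.mpr (by simpa using hre)).symm,
    (Int.modEq_iff_dvd.mpr (by simpa using him)).symm⟩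

section Conjugates

variable {R : Type*} [CommRing R]

/-- The constant term `A` in `F(z) F(-z) = A + B z ^ 2`, where `F(z) = g₀ + g₁ z + g₂ z² + g₃ z³`
and `z ^ 4 = w`. -/
def normConst (w g₀ g₁ g₂ g₃ : R) : R := g₀ ^ 2 + w * g₂ ^ 2 - 2 * w * (g₁ * g₃)

/-- The relative norm of `F(z) = g₀ + g₁ z + g₂ z² + g₃ z³` for `z ^ 4 = i`, `i ^ 2 = -1`: the
product of the values of `F` at the four fourth roots `z, i z, -z, -i z` of `i`. The second
`normConst` is that of `z F(z)`. -/
def cubicNorm (i g₀ g₁ g₂ g₃ : R) : R :=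
  normConst i g₀ g₁ g₂ g₃ ^ 2 + i * normConst i (i * g₃) g₀ g₁ g₂ ^ 2

lemma cubic_mul_cubic_neg {w z : R} (hz : z ^ 4 = w) (g₀ g₁ g₂ g₃ : R) :
    (g₀ + g₁ * z + g₂ * z ^ 2 + g₃ * z ^ 3) *
        (g₀ + g₁ * -z + g₂ * (-z) ^ 2 + g₃ * (-z) ^ 3) =
      normConst w g₀ g₁ g₂ g₃ + (2 * g₀ * g₂ - g₁ ^ 2 - w * g₃ ^ 2) * z ^ 2 := by
  unfold normConst
  linear_combination (g₂ ^ 2 - 2 * g₁ * g₃ - g₃ ^ 2 * z ^ 2) * hz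

lemma prod_cubic_rotations {i z : R} (hi : i ^ 2 = -1) (hz : z ^ 4 = i) (g₀ g₁ g₂ g₃ : R) :
    (g₀ + g₁ * z + g₂ * z ^ 2 + g₃ * z ^ 3) *
          (g₀ + g₁ * (i * z) + g₂ * (i * z) ^ 2 + g₃ * (i * z) ^ 3) *
        (g₀ + g₁ * -z + g₂ * (-z) ^ 2 + g₃ * (-z) ^ 3) *
        (g₀ + g₁ * -(i * z) + g₂ * (-(i * z)) ^ 2 + g₃ * (-(i * z)) ^ 3) =
      cubicNorm i g₀ g₁ g₂ g₃ := by
  have hiz : (i * z) ^ 4 = i := by linear_combination i ^ 4 * hz + i * (i ^ 2 - 1) * hi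
  set A := normConst i g₀ g₁ g₂ g₃
  set B := 2 * g₀ * g₂ - g₁ ^ 2 - i * g₃ ^ 2 with hB
  have hshift : normConst i (i * g₃) g₀ g₁ g₂ = -i * B := by
    rw [normConst, hB]; ring
  calc
    _ = (A + B * z ^ 2) * (A + B * (i * z) ^ 2) := by
      rw [← cubic_mul_cubic_neg hz, ← cubic_mul_cubic_neg hiz]; ring
    _ = A ^ 2 - i * B ^ 2 := by
      linear_combination (A * B * z ^ 2 + B ^ 2 * z ^ 4) * hi - B ^ 2 * hz
    _ = cubicNorm i g₀ g₁ g₂ g₃ := by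
      rw [cubicNorm, hshift]; linear_combination -i * B ^ 2 * hi

lemma normConst_shift_two (w g₀ g₁ g₂ g₃ : R) :
    normConst w (w * g₂) (w * g₃) g₀ g₁ = w * normConst w g₀ g₁ g₂ g₃ := by
  unfold normConst
  ring

end Conjugates

section GaussianModEight

lemma gaussianI_sq : ι ^ 2 = -1 := by
  rw [sq, Zsqrtd.dmuld]; rfl

lemma one_add_i_dvd_iff {x : GaussianInt} : 1 + ι ∣ x ↔ Even (x.re + x.im) := by
  constructor
  · rintro ⟨y, rfl⟩
    exact ⟨y.re, by simp⟩
  · rintro ⟨n, hn⟩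
    have hre : x.re = n + (n - x.im) := by omega
    exact ⟨⟨n, x.im - n⟩, Zsqrtd.ext (by simpa using hre) (by simp)⟩

lemma one_add_i_dvd_i_mul_iff {x : GaussianInt} : 1 + ι ∣ ι * x ↔ 1 + ι ∣ x := by
  simp [one_add_i_dvd_iff, Int.even_add, iff_comm]

lemma one_add_i_dvd_or_dvd_add_one (x : GaussianInt) : 1 + ι ∣ x ∨ 1 + ι ∣ x + 1 := by
  simp only [one_add_i_dvd_iff, Zsqrtd.re_add, Zsqrtd.im_add, Zsqrtd.re_one, Zsqrtd.im_one]
  grind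

lemma two_dvd_mul_succ_mul_mul_succ (x y : GaussianInt) : 2 ∣ x * (x + 1) * (y * (y + 1)) := by
  have hmul (z : GaussianInt) : 1 + ι ∣ z * (z + 1) :=
    (one_add_i_dvd_or_dvd_add_one z).elim (·.mul_right _) (·.mul_left _)
  have hsq : 2 ∣ (1 + ι) * (1 + ι) := ⟨ι, by linear_combination gaussianI_sq⟩
  exact hsq.trans (mul_dvd_mul (hmul x) (hmul y))

lemma exists_sq_eq_one_add_two_mul {u : GaussianInt} (hu : ¬ 1 + ι ∣ u) :
    ∃ t, u ^ 2 = 1 + 2 * t ∧ 2 ∣ t * (t + 1) := by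
  obtain ⟨m, hm⟩ := (one_add_i_dvd_or_dvd_add_one u).resolve_left hu
  obtain rfl : u = (1 + ι) * m - 1 := by linear_combination hm
  refine ⟨ι * m ^ 2 - (1 + ι) * m, by linear_combination m ^ 2 * gaussianI_sq, ?_⟩
  convert (two_dvd_mul_succ_mul_mul_succ (m - 1) (m - 1 + ι)).neg_right using 1
  linear_combination m * (m - 1) * (m ^ 2 - m + 1) * gaussianI_sq

lemma two_dvd_sq_mul_sq_sub_one (h : GaussianInt) : 2 ∣ h ^ 2 * (h ^ 2 - 1) := by
  convert two_dvd_mul_succ_mul_mul_succ h (h - 1) using 1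
  ring

lemma eight_dvd_normConst_sq_sub_of_dvd_right {g₀ g₁ g₂ g₃ : GaussianInt} (h₀ : ¬ 1 + ι ∣ g₀)
    (h₂ : 1 + ι ∣ g₂) (h₁₃ : 1 + ι ∣ g₁ * g₃) :
    8 ∣ normConst ι g₀ g₁ g₂ g₃ ^ 2 - (1 + 4 * (g₁ * g₃)) := by
  obtain ⟨t, ht, c, hc⟩ := exists_sq_eq_one_add_two_mul h₀
  obtain ⟨h, rfl⟩ := h₂
  obtain ⟨q, hq⟩ := h₁₃
  obtain ⟨d, hd⟩ := two_dvd_sq_mul_sq_sub_one h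
  set s := t - h ^ 2 + (1 - ι) * q with hs
  have hA : normConst ι g₀ g₁ ((1 + ι) * h) g₃ = 1 + 2 * s := by
    rw [normConst, ht, hq, hs]
    linear_combination (2 * h ^ 2 - 2 * q + ι * h ^ 2) * gaussianI_sq
  obtain ⟨k, hk⟩ : 2 ∣ s * (s + 1) - g₁ * g₃ :=
    ⟨c + d - t * h ^ 2 + (1 - ι) * q * (t - h ^ 2) - ι * q - ι * q ^ 2, by
      linear_combination hc + hd - hq + q ^ 2 * gaussianI_sq⟩
  exact ⟨k, by rw [hA]; linear_combination 4 * hk⟩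

lemma eight_dvd_four_mul_i_mul_sub {x : GaussianInt} (hx : 1 + ι ∣ x) :
    8 ∣ 4 * (ι * x) - 4 * x := by
  obtain ⟨q, rfl⟩ := hx
  exact ⟨-q, by linear_combination 4 * q * gaussianI_sq⟩

lemma eight_dvd_normConst_sq_sub_of_dvd_left {g₀ g₁ g₂ g₃ : GaussianInt} (h₀ : 1 + ι ∣ g₀)
    (h₂ : ¬ 1 + ι ∣ g₂) (h₁₃ : 1 + ι ∣ g₁ * g₃) :
    8 ∣ normConst ι g₀ g₁ g₂ g₃ ^ 2 - (-1 + 4 * (g₁ * g₃)) := by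
  have hswap := eight_dvd_normConst_sq_sub_of_dvd_right (g₁ := ι * g₃) (g₃ := g₁)
    (mt one_add_i_dvd_i_mul_iff.mp h₂) h₀ (by
      rw [mul_assoc, mul_comm g₃]; exact one_add_i_dvd_i_mul_iff.mpr h₁₃)
  rw [normConst_shift_two] at hswap
  convert ((hswap.add (eight_dvd_four_mul_i_mul_sub h₁₃)).add (dvd_mul_right 8 (g₁ * g₃))).neg_right
    using 1
  linear_combination normConst ι g₀ g₁ g₂ g₃ ^ 2 * gaussianI_sq

lemma eight_dvd_normConst_sq_sub {g₀ g₁ g₂ g₃ : GaussianInt} (h₀₂ : ¬(1 + ι ∣ g₀ ↔ 1 + ι ∣ g₂))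
    (h₁₃ : 1 + ι ∣ g₁ * g₃) {n : ℕ} (hn : Even n ↔ 1 + ι ∣ g₂) :
    8 ∣ normConst ι g₀ g₁ g₂ g₃ ^ 2 - ((-1) ^ n + 4 * (g₁ * g₃)) := by
  by_cases h₂ : 1 + ι ∣ g₂
  · rw [(hn.mpr h₂).neg_one_pow]
    exact eight_dvd_normConst_sq_sub_of_dvd_right (by tauto) h₂ h₁₃
  · rw [(Nat.not_even_iff_odd.mp (mt hn.mp h₂)).neg_one_pow]
    exact eight_dvd_normConst_sq_sub_of_dvd_left (by tauto) h₂ h₁₃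

lemma eight_dvd_cubicNorm_sub {g₀ g₁ g₂ g₃ : GaussianInt} (h₀₂ : ¬(1 + ι ∣ g₀ ↔ 1 + ι ∣ g₂))
    (h₁₃ : ¬(1 + ι ∣ g₁ ↔ 1 + ι ∣ g₃)) {m n : ℕ} (hm : Even m ↔ 1 + ι ∣ g₂)
    (hn : Even n ↔ 1 + ι ∣ g₁) :
    8 ∣ cubicNorm ι g₀ g₁ g₂ g₃ -
      ((-1) ^ m + ι * (-1) ^ n + 4 * (g₀ * g₂ + g₁ * g₃)) := by
  have hdvd₀₂ := dvd_mul_of_not_dvd_iff_dvd h₀₂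
  have hA := eight_dvd_normConst_sq_sub h₀₂ (dvd_mul_of_not_dvd_iff_dvd h₁₃) hm
  have hshift := eight_dvd_normConst_sq_sub (g₀ := ι * g₃) (g₂ := g₁)
    (by rwa [one_add_i_dvd_i_mul_iff, iff_comm]) hdvd₀₂ hn
  convert (hA.add (hshift.mul_left ι)).add (eight_dvd_four_mul_i_mul_sub hdvd₀₂) using 1
  rw [cubicNorm]
  ring

lemma eight_dvd_four_mul_sub_two_mul_intCast {x : GaussianInt} (hx : 1 + ι ∣ x) {T : ℤ}
    (hT : T ≡ 2 * x.re [ZMOD 4]) : 8 ∣ 4 * x - 2 * T * (1 + ι) := by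
  have hpar := one_add_i_dvd_iff.mp hx
  have hre : 8 ∣ 4 * x.re - 2 * T := by grind [Int.ModEq]
  have him : 8 ∣ 4 * x.im - 2 * T := by grind [Int.ModEq]
  exact (Zsqrtd.intCast_dvd 8 _).mpr ⟨by simpa using hre, by simpa using him⟩

end GaussianModEight

section Coefficients

/-- `g_k = e_k + i e_{k+4}`: the coefficient of `ζ ^ k` in `f(ζ)`, for `0 ≤ k ≤ 3`, once
`ζ ^ 4 = i` is used to write `f(ζ)` as a cubic over `ℤ[i]`. -/
def gaussCoef (a : Fin 16 → ℤ) (k : Fin 16) : GaussianInt := ⟨ecoef a k, ecoef a (k + 4)⟩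

/-- `α₁` as a Gaussian integer. -/
def alphaOne (a : Fin 16 → ℤ) : GaussianInt :=
  cubicNorm ι (gaussCoef a 0) (gaussCoef a 1) (gaussCoef a 2) (gaussCoef a 3)

lemma even_natAbs_bcoef_iff (a : Fin 16 → ℤ) (k : Fin 16) :
    Even (bcoef a k).natAbs ↔ 1 + ι ∣ gaussCoef a k := by
  rw [Int.natAbs_even, one_add_i_dvd_iff]
  simp only [bcoef, gaussCoef, ecoef, add_assoc, show (4 + 8 : Fin 16) = 12 from rfl]
  grind

lemma not_dvd_gaussCoef_iff_of_not_modEq (a : Fin 16 → ℤ) (j k : Fin 16)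
    (h : ¬ ecoef a j + ecoef a (j + 4) ≡ ecoef a k + ecoef a (k + 4) [ZMOD 2]) :
    ¬(1 + ι ∣ gaussCoef a j ↔ 1 + ι ∣ gaussCoef a k) := by
  simp only [one_add_i_dvd_iff, gaussCoef, Int.ModEq] at h ⊢
  grind

lemma bcoef_mul_add_ccoef_mul_modEq (a : Fin 16 → ℤ) (j k : Fin 16) :
    bcoef a j * bcoef a k + ccoef a j * ccoef a k ≡
      2 * (gaussCoef a j * gaussCoef a k).re [ZMOD 4] := by
  refine (Int.modEq_iff_add_fac.mpr
    ⟨a j * a (k + 8) + a (j + 8) * a k + a (j + 4) * a (k + 4) + a (j + 12) * a (k + 12), ?_⟩).symm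
  simp only [bcoef, ccoef, gaussCoef, ecoef, Zsqrtd.re_mul, add_assoc,
    show (4 + 8 : Fin 16) = 12 from rfl]
  ring

lemma zeta16_pow_four : zeta16 ^ 4 = I := by
  rw [zeta16, ← Complex.exp_nat_mul]
  convert Complex.exp_pi_div_two_mul_I using 2
  push_cast
  ring

lemma fpoly_eq_cubic (a : Fin 16 → ℤ) {z : ℂ} (hz : z ^ 4 = I) :
    fpoly a z = gaussCoef a 0 + gaussCoef a 1 * z + gaussCoef a 2 * z ^ 2 +
      gaussCoef a 3 * z ^ 3 := by
  have hz8 : z ^ 8 = -1 := by rw [← I_sq, ← hz]; ring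
  have hz12 : z ^ 12 = -I := by rw [← neg_one_mul, ← hz8, ← hz]; ring
  simp only [fpoly, Fin.sum_univ_ofNat, Fin.coe_ofNat_eq_mod, Nat.reduceMod, gaussCoef, ecoef,
    GaussianInt.toComplex_def', Fin.reduceAdd, Int.cast_sub]
  linear_combination (a 4 + a 5 * z + a 6 * z ^ 2 + a 7 * z ^ 3) * hz +
    (a 8 + a 9 * z + a 10 * z ^ 2 + a 11 * z ^ 3) * hz8 +
    (a 12 + a 13 * z + a 14 * z ^ 2 + a 15 * z ^ 3) * hz12

lemma toComplex_sqrtd : (ι : ℂ) = I := by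
  simp [GaussianInt.toComplex_def]

lemma fpoly_conjugate_prod (a : Fin 16 → ℤ) :
    fpoly a zeta16 * fpoly a (zeta16 ^ 5) * fpoly a (zeta16 ^ 9) * fpoly a (zeta16 ^ 13) =
      alphaOne a := by
  have hz := zeta16_pow_four
  have hz5 : zeta16 ^ 5 = I * zeta16 := by rw [pow_succ, hz]
  have hz9 : zeta16 ^ 9 = -zeta16 := by
    rw [← neg_one_mul, ← I_sq, ← hz]; ring
  have hz13 : zeta16 ^ 13 = -(I * zeta16) := by
    rw [← neg_one_mul, ← I_sq, ← hz]; ring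
  have hIz : (I * zeta16) ^ 4 = I := by rw [mul_pow, I_pow_four, one_mul, hz]
  have heven : Even 4 := by decide
  rw [hz5, hz9, hz13, fpoly_eq_cubic a hz, fpoly_eq_cubic a hIz,
    fpoly_eq_cubic a (heven.neg_pow _ |>.trans hz), fpoly_eq_cubic a (heven.neg_pow _ |>.trans hIz),
    prod_cubic_rotations I_sq hz]
  simp only [alphaOne, cubicNorm, normConst, map_add, map_sub, map_mul, map_pow, map_ofNat,
    toComplex_sqrtd]

lemma alphaOne_re_im_modEq (a : Fin 16 → ℤ)
    (h₀₂ : ¬ ecoef a 0 + ecoef a 4 ≡ ecoef a 2 + ecoef a 6 [ZMOD 2])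
    (h₁₃ : ¬ ecoef a 1 + ecoef a 5 ≡ ecoef a 3 + ecoef a 7 [ZMOD 2]) :
    (alphaOne a).re ≡ (-1) ^ (bcoef a 2).natAbs
        + 2 * (bcoef a 0 * bcoef a 2 + bcoef a 1 * bcoef a 3
          + ccoef a 0 * ccoef a 2 + ccoef a 1 * ccoef a 3) [ZMOD 8] ∧
      (alphaOne a).im ≡ (-1) ^ (bcoef a 1).natAbs
        + 2 * (bcoef a 0 * bcoef a 2 + bcoef a 1 * bcoef a 3
          + ccoef a 0 * ccoef a 2 + ccoef a 1 * ccoef a 3) [ZMOD 8] := by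
  have hg₀₂ := not_dvd_gaussCoef_iff_of_not_modEq a 0 2 h₀₂
  have hg₁₃ := not_dvd_gaussCoef_iff_of_not_modEq a 1 3 h₁₃
  have hα := eight_dvd_cubicNorm_sub hg₀₂ hg₁₃ (even_natAbs_bcoef_iff a 2)
    (even_natAbs_bcoef_iff a 1)
  have hT := (bcoef_mul_add_ccoef_mul_modEq a 0 2).add (bcoef_mul_add_ccoef_mul_modEq a 1 3)
  rw [← mul_add, ← Zsqrtd.re_add] at hT
  have hmixed := eight_dvd_four_mul_sub_two_mul_intCast
    ((dvd_mul_of_not_dvd_iff_dvd hg₀₂).add (dvd_mul_of_not_dvd_iff_dvd hg₁₃)) hT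
  obtain ⟨y, hy⟩ := hα.add hmixed
  push_cast at hy
  exact re_im_modEq_of_dvd_sub ⟨y, by push_cast [alphaOne]; linear_combination hy⟩

end Coefficients

theorem alpha1_re_im_mod_eight (a : Fin 16 → ℤ)
    (h02 : ¬ ecoef a 0 + ecoef a 4 ≡ ecoef a 2 + ecoef a 6 [ZMOD 2])
    (h13 : ¬ ecoef a 1 + ecoef a 5 ≡ ecoef a 3 + ecoef a 7 [ZMOD 2]) :
    (∃ m : ℤ,
      (fpoly a zeta16 * fpoly a (zeta16 ^ 5) * fpoly a (zeta16 ^ 9) * fpoly a (zeta16 ^ 13)).re =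
        (((-1) ^ (bcoef a 2).natAbs
          + 2 * (bcoef a 0 * bcoef a 2 + bcoef a 1 * bcoef a 3
            + ccoef a 0 * ccoef a 2 + ccoef a 1 * ccoef a 3) + 8 * m : ℤ) : ℝ)) ∧
    (∃ m : ℤ,
      (fpoly a zeta16 * fpoly a (zeta16 ^ 5) * fpoly a (zeta16 ^ 9) * fpoly a (zeta16 ^ 13)).im =
        (((-1) ^ (bcoef a 1).natAbs
          + 2 * (bcoef a 0 * bcoef a 2 + bcoef a 1 * bcoef a 3
            + ccoef a 0 * ccoef a 2 + ccoef a 1 * ccoef a 3) + 8 * m : ℤ) : ℝ)) := by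
  obtain ⟨hre, him⟩ := alphaOne_re_im_modEq a h02 h13
  obtain ⟨m, hm⟩ := Int.modEq_iff_add_fac.mp hre.symm
  obtain ⟨n, hn⟩ := Int.modEq_iff_add_fac.mp him.symm
  rw [fpoly_conjugate_prod, ← GaussianInt.intCast_re, ← GaussianInt.intCast_im]
  exact ⟨⟨m, congrArg _ hm⟩, ⟨n, congrArg _ hn⟩⟩
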